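/- Every interval graph G with an interval representation I admits a semi-proper interval representation, i.e., an interval representation I′ of the same graph G such that for any two vertices u,v, if I′_v ⊆ I′_u then there exist vertices a,b such that {u,v,a,b} induces a claw K_{1,3} in G. -/

import Mathlib

/-- The set `{c, a, b, d}` induces a claw `K_{1,3}` in `G` with center `c`
and leaves `a, b, d`. -/
def InducedClaw {V : Type*} (G : SimpleGraph V) (c a b d : V) : Prop :=
  G.Adj c a ∧ G.Adj c b ∧ G.Adj c d ∧
  ¬ G.Adj a b ∧ ¬ G.Adj a d ∧ ¬ G.Adj b d ∧ a ≠ b ∧ a ≠ d ∧ b ≠ d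

/-- The set `s` induces a claw `K_{1,3}` in `G`. -/
def InducesClawOn {V : Type*} (G : SimpleGraph V) (s : Set V) : Prop :=
  ∃ c a b d : V, s = {c, a, b, d} ∧ InducedClaw G c a b d

/-!
Compress the given representation: replace every endpoint by a cut so that left endpoints not
separated by a right endpoint become equal, and right endpoints not separated by a left endpoint
become equal. If `v` lies strictly inside `u` after compression, then some right endpoint `r a`
lies in `[l u, l v)` and some left endpoint `l b` lies in `(r v, r u]`, so `u` is the center of a
claw with leaves `v`, `a`, `b`. It remains to make the endpoints distinct without creating other
containments: ties between left endpoints are broken by the right ones, ties between right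
endpoints by the left ones, and ties between equal intervals by a fixed order on the vertices,
used in the same direction on both sides.
-/

/-- The closed intervals `[l v, r v]`, with endpoints in a preorder, represent `G` as an interval
graph. Endpoints are allowed to coincide, so that one notion covers the given representation, its
compression and the final representation. -/
structure IsIntervalRep {V α : Type*} [Preorder α] (G : SimpleGraph V) (l r : V → α) : Prop where
  le : ∀ v, l v ≤ r v
  adj_iff : ∀ u v, G.Adj u v ↔ u ≠ v ∧ l u ≤ r v ∧ l v ≤ r u

namespace IsIntervalRep

theorem of_le_iff {V α β : Type*} [Preorder α] [Preorder β] {G : SimpleGraph V} {l r : V → α}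
    {l' r' : V → β} (hG : IsIntervalRep G l r) (h : ∀ u v, l' u ≤ r' v ↔ l u ≤ r v) :
    IsIntervalRep G l' r' where
  le v := (h v v).2 (hG.le v)
  adj_iff u v := by rw [hG.adj_iff, h, h]

variable {V α : Type*} [LinearOrder α] {G : SimpleGraph V} {l r : V → α}

theorem not_adj_of_lt (hG : IsIntervalRep G l r) {u v : V} (h : r u < l v) : ¬ G.Adj u v :=
  fun huv => ((hG.adj_iff u v).1 huv).2.2.not_gt h

theorem ne_of_lt (hG : IsIntervalRep G l r) {u v : V} (h : r u < l v) : u ≠ v := by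
  rintro rfl
  exact (hG.le u).not_gt h

theorem inducedClaw (hG : IsIntervalRep G l r) {u v a b : V} (hua : l u ≤ r a) (hav : r a < l v)
    (hvb : r v < l b) (hbu : l b ≤ r u) : InducedClaw G u v a b := by
  have hv := hG.le v
  have hab : r a < l b := hav.trans_le hv |>.trans hvb
  have huv : G.Adj u v := (hG.adj_iff u v).2
    ⟨fun h => (h ▸ hua).not_gt hav, hua.trans (hav.le.trans hv), hv.trans (hvb.le.trans hbu)⟩
  have hua' : G.Adj u a := (hG.adj_iff u a).2
    ⟨fun h => (h ▸ hbu).not_gt hab, hua, (hG.le a).trans (hab.le.trans hbu)⟩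
  have hub : G.Adj u b := (hG.adj_iff u b).2
    ⟨fun h => (h ▸ hua).not_gt hab, hua.trans (hab.le.trans (hG.le b)), hbu⟩
  exact ⟨huv, hua', hub, fun h => hG.not_adj_of_lt hav h.symm, hG.not_adj_of_lt hvb,
    hG.not_adj_of_lt hab, (hG.ne_of_lt hav).symm, hG.ne_of_lt hvb, hG.ne_of_lt hab⟩

end IsIntervalRep

section Compression

variable {V α : Type*} [LinearOrder α] (l r : V → α)

/-- The compressed left endpoint of `u`: the cut of `α` generated by the right endpoints to the left
of `l u`. -/
def leftCut (u : V) : LowerSet α :=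
  lowerClosure (Set.range r ∩ Set.Iio (l u))

/-- The compressed right endpoint of `v`: the lowest position not before any compressed left
endpoint `leftCut l r u` with `l u ≤ r v`. -/
def rightCut (v : V) : LowerSet α :=
  ⨆ u : {u // l u ≤ r v}, leftCut l r u

variable {l r}

theorem mem_leftCut {u : V} {t : α} : t ∈ leftCut l r u ↔ ∃ a, r a < l u ∧ t ≤ r a := by
  simp [leftCut, and_assoc]

theorem leftCut_le_rightCut_iff {u v : V} : leftCut l r u ≤ rightCut l r v ↔ l u ≤ r v := by
  refine ⟨fun h => ?_, fun h => le_iSup (fun w : {w // l w ≤ r v} => leftCut l r w) ⟨u, h⟩⟩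
  by_contra! hvu
  have hv : r v ∈ rightCut l r v := h (mem_leftCut.2 ⟨v, hvu, le_rfl⟩)
  obtain ⟨⟨w, hwv⟩, hw⟩ := LowerSet.mem_iSup_iff.1 hv
  obtain ⟨a, haw, hva⟩ := mem_leftCut.1 hw
  exact (hwv.trans hva).not_gt haw

theorem exists_right_of_leftCut_lt {u v : V} (h : leftCut l r u < leftCut l r v) :
    ∃ a, l u ≤ r a ∧ r a < l v := by
  obtain ⟨t, htv, htu⟩ := Set.not_subset.1 h.not_ge
  obtain ⟨a, hav, hta⟩ := mem_leftCut.1 htv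
  exact ⟨a, not_lt.1 fun hau => htu (mem_leftCut.2 ⟨a, hau, hta⟩), hav⟩

theorem exists_left_of_rightCut_lt {u v : V} (h : rightCut l r v < rightCut l r u) :
    ∃ b, r v < l b ∧ l b ≤ r u := by
  obtain ⟨⟨b, hbu⟩, hvb⟩ := lt_iSup_iff.1 h
  exact ⟨b, not_le.1 fun hbv => (leftCut_le_rightCut_iff.2 hbv).not_gt hvb, hbu⟩

end Compression

section TieBreaking

/-- The left endpoint of `u` with ties broken: `false` puts it before the right endpoints at the
same position, and the remaining ties are broken by the right endpoint and then by the vertex. -/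
def leftKey {V α : Type*} (l r : V → α) (u : V) : α ×ₗ Bool ×ₗ α ×ₗ V :=
  toLex (l u, toLex (false, toLex (r u, u)))

/-- The right endpoint of `v` with ties broken: `true` puts it after the left endpoints at the same
position, and the remaining ties are broken by the left endpoint and then by the vertex. -/
def rightKey {V α : Type*} (l r : V → α) (v : V) : α ×ₗ Bool ×ₗ α ×ₗ V :=
  toLex (r v, toLex (true, toLex (l v, v)))

theorem sumElim_leftKey_rightKey_injective {V α : Type*} (l r : V → α) :
    Function.Injective (Sum.elim (leftKey l r) (rightKey l r)) := by
  rintro (u | u) (v | v) h <;> simp_all [leftKey, rightKey]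

variable {V α : Type*} [LinearOrder V] [LinearOrder α] {l r : V → α} {u v : V}

theorem leftKey_le_rightKey_iff : leftKey l r u ≤ rightKey l r v ↔ l u ≤ r v := by
  simp [leftKey, rightKey, Prod.Lex.toLex_le_toLex, ← le_iff_lt_or_eq]

theorem leftKey_le_leftKey_iff :
    leftKey l r u ≤ leftKey l r v ↔ l u < l v ∨ l u = l v ∧ (r u < r v ∨ r u = r v ∧ u ≤ v) := by
  simp [leftKey, Prod.Lex.toLex_le_toLex]

theorem rightKey_le_rightKey_iff :
    rightKey l r u ≤ rightKey l r v ↔ r u < r v ∨ r u = r v ∧ (l u < l v ∨ l u = l v ∧ u ≤ v) := by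
  simp [rightKey, Prod.Lex.toLex_le_toLex]

theorem lt_and_lt_of_key_le (huv : u ≠ v) (hl : leftKey l r u ≤ leftKey l r v)
    (hr : rightKey l r v ≤ rightKey l r u) : l u < l v ∧ r v < r u := by
  rw [leftKey_le_leftKey_iff] at hl
  rw [rightKey_le_rightKey_iff] at hr
  grind

end TieBreaking

theorem IsIntervalRep.exists_inducesClawOn_of_key_le {V α : Type*} [LinearOrder V] [LinearOrder α]
    {G : SimpleGraph V} {l r : V → α} (hG : IsIntervalRep G l r) {u v : V} (huv : u ≠ v)
    (hl : leftKey (leftCut l r) (rightCut l r) u ≤ leftKey (leftCut l r) (rightCut l r) v)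
    (hr : rightKey (leftCut l r) (rightCut l r) v ≤ rightKey (leftCut l r) (rightCut l r) u) :
    ∃ a b, InducesClawOn G {u, v, a, b} := by
  obtain ⟨hleft, hright⟩ := lt_and_lt_of_key_le huv hl hr
  obtain ⟨a, hua, hav⟩ := exists_right_of_leftCut_lt hleft
  obtain ⟨b, hvb, hbu⟩ := exists_left_of_rightCut_lt hright
  exact ⟨a, b, u, v, a, b, rfl, hG.inducedClaw hua hav hvb hbu⟩

theorem exists_le_iff_le_of_countable {ι γ : Type*} (β : Type*) [Countable ι] [LinearOrder γ]
    [LinearOrder β] [DenselyOrdered β] [Nontrivial β] (e : ι → γ) :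
    ∃ f : ι → β, ∀ i j, f i ≤ f j ↔ e i ≤ e j := by
  have : Countable (Set.range e) := (Set.countable_range e).to_subtype
  obtain ⟨g⟩ := Order.embedding_from_countable_to_dense (Set.range e) β
  exact ⟨fun i => g ⟨e i, i, rfl⟩, fun i j => g.le_iff_le⟩

theorem stmt1_general {V α β : Type*} [Countable V] [LinearOrder α] [LinearOrder β]
    [DenselyOrdered β] [Nontrivial β] (G : SimpleGraph V) (l r : V → α) (hlr : ∀ v, l v ≤ r v)
    (hadj : ∀ u v, G.Adj u v ↔ u ≠ v ∧ l u ≤ r v ∧ l v ≤ r u) :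
    ∃ l' r' : V → β,
      (∀ v, l' v < r' v) ∧
      Function.Injective l' ∧ Function.Injective r' ∧
      (∀ u v, l' u ≠ r' v) ∧
      (∀ u v, G.Adj u v ↔ u ≠ v ∧ l' u ≤ r' v ∧ l' v ≤ r' u) ∧
      (∀ u v, u ≠ v →
        Set.Icc (l' v) (r' v) ⊆ Set.Icc (l' u) (r' u) →
        ∃ a b, InducesClawOn G {u, v, a, b}) := by
  obtain ⟨_, -⟩ := exists_wellFoundedLT V
  have hG : IsIntervalRep G l r := ⟨hlr, hadj⟩
  let e := Sum.elim (leftKey (leftCut l r) (rightCut l r)) (rightKey (leftCut l r) (rightCut l r))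
  obtain ⟨f, hf⟩ := exists_le_iff_le_of_countable β e
  have hrep : IsIntervalRep G (f ∘ Sum.inl) (f ∘ Sum.inr) := hG.of_le_iff fun u v =>
    (hf _ _).trans (leftKey_le_rightKey_iff.trans leftCut_le_rightCut_iff)
  have hinj : Function.Injective f := fun x y h =>
    sumElim_leftKey_rightKey_injective _ _ (((hf x y).1 h.le).antisymm ((hf y x).1 h.ge))
  have hne (u v : V) : f (Sum.inl u) ≠ f (Sum.inr v) := hinj.ne Sum.inl_ne_inr
  refine ⟨f ∘ Sum.inl, f ∘ Sum.inr, fun v => (hrep.le v).lt_of_ne (hne v v),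
    hinj.comp Sum.inl_injective, hinj.comp Sum.inr_injective, hne, hrep.adj_iff,
    fun u v huv hsub => ?_⟩
  obtain ⟨hl, hr⟩ := (Set.Icc_subset_Icc_iff (hrep.le v)).1 hsub
  exact hG.exists_inducesClawOn_of_key_le huv ((hf _ _).1 hl) ((hf _ _).1 hr)

theorem stmt1 {V : Type*} [Fintype V]
    (G : SimpleGraph V) (l r : V → ℝ)
    (hlr : ∀ v : V, l v < r v)
    (hinjl : Function.Injective l) (hinjr : Function.Injective r)
    (hlrne : ∀ u v : V, l u ≠ r v)
    (hadj : ∀ u v : V, G.Adj u v ↔ u ≠ v ∧ l u ≤ r v ∧ l v ≤ r u) :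
    ∃ l' r' : V → ℝ,
      (∀ v : V, l' v < r' v) ∧
      Function.Injective l' ∧ Function.Injective r' ∧
      (∀ u v : V, l' u ≠ r' v) ∧
      (∀ u v : V, G.Adj u v ↔ u ≠ v ∧ l' u ≤ r' v ∧ l' v ≤ r' u) ∧
      (∀ u v : V, u ≠ v →
        Set.Icc (l' v) (r' v) ⊆ Set.Icc (l' u) (r' u) →
        ∃ a b : V, InducesClawOn G {u, v, a, b}) :=
  stmt1_general G l r (fun v => (hlr v).le) hadj
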